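/- The centralizer of the torus T_M = ⟨x₁D₁, x₂D₂⟩_F inside the Melikian algebra M equals C_M = T_M ⊕ F·(x₁²x₂²) ⊕ F·(x₁⁴x₂³D̃₁) ⊕ F·(x₁³x₂⁴D̃₂); in particular it has dimension 5 and is a Cartan subalgebra of M. -/

import Mathlib

open scoped BigOperators

namespace Melikian

/-- Index set for monomials in the truncated polynomial algebra
`A(2) = F[x₁,x₂]/(x₁⁵,x₂⁵)`. -/
abbrev Idx : Type := Fin 5 × Fin 5

/-- The truncated polynomial algebra `A(2)`, as functions on monomial exponents. -/
abbrev A (F : Type*) [Field F] : Type _ := Idx → F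

variable {F : Type*} [Field F]

/-- The monomial `x^b = x₁^{b₁} x₂^{b₂}`. -/
def X (b : Idx) : A F := fun a => if a = b then 1 else 0

/-- Truncated multiplication of `A(2)`. -/
def mulA (f g : A F) : A F := fun a =>
  ∑ b : Idx, ∑ c : Idx,
    if b.1.val + c.1.val = a.1.val ∧ b.2.val + c.2.val = a.2.val then f b * g c else 0

/-- Partial derivative `∂/∂x₁` on `A(2)`. -/
def d1 (f : A F) : A F := fun a =>
  if h : a.1.val + 1 < 5 then ((a.1.val + 1 : ℕ) : F) * f (⟨a.1.val + 1, h⟩, a.2) else 0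

/-- Partial derivative `∂/∂x₂` on `A(2)`. -/
def d2 (f : A F) : A F := fun a =>
  if h : a.2.val + 1 < 5 then ((a.2.val + 1 : ℕ) : F) * f (a.1, ⟨a.2.val + 1, h⟩) else 0

/-- The Witt–Jacobson algebra `W(2)` as a free `A(2)`-module with basis `D₁, D₂`:
an element `(f₁, f₂)` stands for `f₁D₁ + f₂D₂`. -/
abbrev W (F : Type*) [Field F] : Type _ := A F × A F

/-- Action of a derivation `D = f₁D₁+f₂D₂ ∈ W(2)` on `A(2)`. -/
def Dw (D : W F) (g : A F) : A F := mulA D.1 (d1 g) + mulA D.2 (d2 g)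

/-- Divergence `div(f₁D₁+f₂D₂) = D₁(f₁) + D₂(f₂)`. -/
def divW (D : W F) : A F := d1 D.1 + d2 D.2

/-- The usual bracket of `W(2)`. -/
def brW (D E : W F) : W F := (Dw D E.1 - Dw E D.1, Dw D E.2 - Dw E D.2)

/-- Multiplication of an element of `W(2)` by a truncated polynomial. -/
def smulA (f : A F) (D : W F) : W F := (mulA f D.1, mulA f D.2)

/-- The Melikian algebra `M = A(2) ⊕ W(2) ⊕ W(2)~` as an `F`-vector space. -/
abbrev Mel (F : Type*) [Field F] : Type _ := A F × W F × W F

/-- Inclusion of `A(2)` into `M`. -/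
def ιA (f : A F) : Mel F := (f, 0, 0)

/-- Inclusion of `W(2)` into `M`. -/
def ιW (D : W F) : Mel F := (0, D, 0)

/-- Inclusion of the second copy `W(2)~` into `M`, `D ↦ D̃`. -/
def ιT (D : W F) : Mel F := (0, 0, D)

/-- The Melikian bracket on `M = A(2) ⊕ W(2) ⊕ W(2)~`, defined by the rules
`[D,Ẽ] = [D,E]~ + 2 div(D) Ẽ`, `[D,f] = D(f) − 2 div(D) f`,
`[f₁D̃₁+f₂D̃₂, g₁D̃₁+g₂D̃₂] = f₁g₂ − f₂g₁`, `[f,Ẽ] = fE`,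
`[f,g] = 2(gD₂(f) − fD₂(g))D̃₁ + 2(fD₁(g) − gD₁(f))D̃₂`,
extended bilinearly and antisymmetrically (with the standard bracket on `W(2)`). -/
def brM (u v : Mel F) : Mel F :=
  ( (Dw u.2.1 v.1 - (2 : F) • mulA (divW u.2.1) v.1)
      - (Dw v.2.1 u.1 - (2 : F) • mulA (divW v.2.1) u.1)
      + (mulA u.2.2.1 v.2.2.2 - mulA u.2.2.2 v.2.2.1)
  , brW u.2.1 v.2.1 + smulA u.1 v.2.2 - smulA v.1 u.2.2
  , (brW u.2.1 v.2.2 + (2 : F) • smulA (divW u.2.1) v.2.2)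
      - (brW v.2.1 u.2.2 + (2 : F) • smulA (divW v.2.1) u.2.2)
      + ((2 : F) • (mulA v.1 (d2 u.1) - mulA u.1 (d2 v.1)),
         (2 : F) • (mulA u.1 (d1 v.1) - mulA v.1 (d1 u.1))) )

/-- `x^b D_i` as an element of `W(2)` (`i = 0` stands for `D₁`, `i = 1` for `D₂`). -/
def wOf (i : Fin 2) (b : Idx) : W F := if i = 0 then (X b, 0) else (0, X b)

/-- The element `x₁D₁ ∈ M`. -/
def x1D1 : Mel F := ιW (X (1, 0), 0)

/-- The element `x₂D₂ ∈ M`. -/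
def x2D2 : Mel F := ιW (0, X (0, 1))

/-- The element `1 ∈ A(2) ⊂ M`. -/
def oneM : Mel F := ιA (X (0, 0))

/-- The element `D_{i+1} ∈ W(2) ⊂ M`. -/
def DD (i : Fin 2) : Mel F := ιW (wOf i (0, 0))

/-- The element `D̃_{i+1} ∈ W(2)~ ⊂ M`. -/
def TT (i : Fin 2) : Mel F := ιT (wOf i (0, 0))

/-- Total degree of a monomial exponent. -/
def degA (b : Idx) : ℤ := (b.1.val : ℤ) + (b.2.val : ℤ)

/-- The degree-`d` piece `M_d` of the `ℤ`-grading of the Melikian algebra: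
`deg_M(f) = 3 deg(f) − 2` on `A(2)`, `deg_M(x^bD_i) = 3(|b|−1)` on `W(2)`, and
`deg_M(x^bD̃_i) = 3(|b|−1)+2` on `W(2)~`. -/
def Md (d : ℤ) : Submodule F (Mel F) :=
  Submodule.span F
    ( {m | ∃ b : Idx, m = ιA (X b) ∧ d = 3 * degA b - 2}
      ∪ {m | ∃ b : Idx, ∃ i : Fin 2, m = ιW (wOf i b) ∧ d = 3 * (degA b - 1)}
      ∪ {m | ∃ b : Idx, ∃ i : Fin 2, m = ιT (wOf i b) ∧ d = 3 * (degA b - 1) + 2} )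

/-- The part `M_{≥ d}` of the Melikian algebra. -/
def Mge (d : ℤ) : Submodule F (Mel F) := ⨆ e : ℤ, ⨆ _ : d ≤ e, (Md e : Submodule F (Mel F))

/-- The squaring `Sq(γ)(x,y) = Σ_{k=1}^{4} [γ^k(x), γ^{5−k}(y)] / (k!(5−k)!)`
of an operator `γ` on the Melikian algebra (characteristic 5). -/
def melSq (γ : Mel F → Mel F) (x y : Mel F) : Mel F :=
  ∑ k ∈ Finset.Icc 1 4,
    ((Nat.factorial k * Nat.factorial (5 - k) : ℕ) : F)⁻¹ • brM (γ^[k] x) (γ^[5 - k] y)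

/-- The Chevalley–Eilenberg coboundary of a linear 1-cochain of `M` with values in the
adjoint representation. -/
def cob (g : Mel F →ₗ[F] Mel F) (x y : Mel F) : Mel F :=
  brM x (g y) - brM y (g x) - g (brM x y)


/-- The canonical Cartan subalgebra
`C_M = T_M ⊕ F·(x₁²x₂²) ⊕ F·(x₁⁴x₂³D̃₁) ⊕ F·(x₁³x₂⁴D̃₂)` of the Melikian algebra. -/
def CM (F : Type*) [Field F] : Submodule F (Mel F) :=
  Submodule.span F
    {x1D1, x2D2, ιA (X (2, 2)), ιT (X (4, 3), 0), ιT (0, X (3, 4))}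

theorem mulA_comm (f g : A F) : mulA f g = mulA g f := by
  funext a
  unfold mulA
  rw [Finset.sum_comm]
  refine Finset.sum_congr rfl fun b _ => Finset.sum_congr rfl fun c _ => ?_
  simp only [add_comm, mul_comm]

theorem mulA_smul_left (r : F) (f g : A F) : mulA (r • f) g = r • mulA f g := by
  funext a
  simp only [mulA, Pi.smul_apply, smul_eq_mul, Finset.mul_sum, mul_ite, mul_zero, mul_assoc]

theorem mulA_smul_right (r : F) (f g : A F) : mulA f (r • g) = r • mulA f g := by
  rw [mulA_comm, mulA_smul_left, mulA_comm]

theorem mulA_add_left (f g h : A F) : mulA (f + g) h = mulA f h + mulA g h := by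
  funext a
  simp only [mulA, Pi.add_apply, ← Finset.sum_add_distrib, add_mul]
  refine Finset.sum_congr rfl fun b _ => Finset.sum_congr rfl fun c _ => ?_
  split_ifs <;> simp

theorem mulA_zero_left (g : A F) : mulA 0 g = 0 := by
  funext a
  simp [mulA]

theorem mulA_zero_right (g : A F) : mulA g 0 = 0 := by
  rw [mulA_comm, mulA_zero_left]

theorem d1_smul (r : F) (f : A F) : d1 (r • f) = r • d1 f := by
  funext a
  simp only [d1, Pi.smul_apply, smul_eq_mul, mul_dite, mul_zero, mul_left_comm]

theorem d2_smul (r : F) (f : A F) : d2 (r • f) = r • d2 f := by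
  funext a
  simp only [d2, Pi.smul_apply, smul_eq_mul, mul_dite, mul_zero, mul_left_comm]

theorem d1_zero : d1 (0 : A F) = 0 := by
  funext a
  simp [d1]

theorem d2_zero : d2 (0 : A F) = 0 := by
  funext a
  simp [d2]

/-- Multiplication by a monomial shifts coefficients. -/
theorem mulA_X_apply (b a : Idx) (g : A F) :
    mulA (X b) g a =
      if b.1 ≤ a.1 ∧ b.2 ≤ a.2 then g (a.1 - b.1, a.2 - b.2) else 0 := by
  unfold mulA
  rw [Finset.sum_eq_single b]
  · have key : ∀ c : Idx, (b.1.val + c.1.val = a.1.val ∧ b.2.val + c.2.val = a.2.val) ↔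
        (b.1 ≤ a.1 ∧ b.2 ≤ a.2) ∧ c = (a.1 - b.1, a.2 - b.2) := by
      rintro ⟨c₁, c₂⟩
      obtain ⟨a₁, a₂⟩ := a
      obtain ⟨b₁, b₂⟩ := b
      simp only [Prod.mk.injEq]
      have h : ∀ x y z : Fin 5, x.val + y.val = z.val ↔ x ≤ z ∧ y = z - x := by decide
      rw [h, h]
      tauto
    simp only [key, X, if_true, one_mul]
    split_ifs with h <;> simp [h]
  · intro c _ hc
    simp [X, hc]
  · simp

theorem mulA_X_zero (g : A F) : mulA (X (0, 0)) g = g := by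
  funext a
  simp [mulA_X_apply]

/-- A product of monomials vanishes when an exponent exceeds `4`. -/
theorem mulA_X_X_eq_zero (b c : Idx)
    (h : 5 ≤ b.1.val + c.1.val ∨ 5 ≤ b.2.val + c.2.val) :
    mulA (X b) (X c : A F) = 0 := by
  funext a
  unfold mulA
  refine Finset.sum_eq_zero fun p _ => Finset.sum_eq_zero fun q _ => ?_
  split_ifs with hpq
  · by_cases hp : p = b
    · by_cases hq : q = c
      · subst hp hq
        have h₁ := a.1.isLt
        have h₂ := a.2.isLt
        omega
      · simp [X, hq]
    · simp [X, hp]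
  · rfl

theorem d1_X_one_zero : d1 (X (1, 0) : A F) = X (0, 0) := by
  funext ⟨a, b⟩
  fin_cases a <;> simp [d1, X]

theorem d2_X_one_zero : d2 (X (1, 0) : A F) = 0 := by
  funext ⟨a, b⟩
  fin_cases b <;> simp [d2, X]

theorem d1_X_zero_one : d1 (X (0, 1) : A F) = 0 := by
  funext ⟨a, b⟩
  fin_cases a <;> simp [d1, X]

theorem d2_X_zero_one : d2 (X (0, 1) : A F) = X (0, 0) := by
  funext ⟨a, b⟩
  fin_cases b <;> simp [d2, X]

/-- The Euler operator `x₁∂₁` is diagonal on monomials. -/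
theorem mulA_X_d1_apply (f : A F) (a : Idx) :
    mulA (X (1, 0)) (d1 f) a = (a.1.val : F) * f a := by
  obtain ⟨a, b⟩ := a
  rw [mulA_X_apply]
  fin_cases a <;> simp [d1]

/-- The Euler operator `x₂∂₂` is diagonal on monomials. -/
theorem mulA_X_d2_apply (f : A F) (a : Idx) :
    mulA (X (0, 1)) (d2 f) a = (a.2.val : F) * f a := by
  obtain ⟨a, b⟩ := a
  rw [mulA_X_apply]
  fin_cases b <;> simp [d2]

theorem mulA_X_d1_X (b : Idx) : mulA (X (1, 0)) (d1 (X b : A F)) = (b.1.val : F) • X b := by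
  funext a
  rw [mulA_X_d1_apply]
  by_cases h : a = b <;> simp [X, h]

theorem mulA_X_d2_X (b : Idx) : mulA (X (0, 1)) (d2 (X b : A F)) = (b.2.val : F) • X b := by
  funext a
  rw [mulA_X_d2_apply]
  by_cases h : a = b <;> simp [X, h]

/-- The operator `x₁∂₁ - b₁` on `A(2)`. -/
def eulerSub₁ (b : Idx) (f : A F) : A F := fun a => ((a.1.val : F) - b.1.val) * f a

/-- The operator `x₂∂₂ - b₂` on `A(2)`. -/
def eulerSub₂ (b : Idx) (f : A F) : A F := fun a => ((a.2.val : F) - b.2.val) * f a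

theorem eulerSub₁_eq_zero_of_sq {b : Idx} {f : A F}
    (h : eulerSub₁ b (eulerSub₁ b f) = 0) : eulerSub₁ b f = 0 := by
  funext a
  have ha := congrFun h a
  simp only [eulerSub₁, Pi.zero_apply, mul_eq_zero] at ha ⊢
  tauto

theorem eulerSub₂_eq_zero_of_sq {b : Idx} {f : A F}
    (h : eulerSub₂ b (eulerSub₂ b f) = 0) : eulerSub₂ b f = 0 := by
  funext a
  have ha := congrFun h a
  simp only [eulerSub₂, Pi.zero_apply, mul_eq_zero] at ha ⊢
  tauto

theorem eulerSub₁_smul_X (b : Idx) (r : F) : eulerSub₁ b (r • X b : A F) = 0 := by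
  funext a
  by_cases h : a = b <;> simp [eulerSub₁, X, h]

theorem eulerSub₂_smul_X (b : Idx) (r : F) : eulerSub₂ b (r • X b : A F) = 0 := by
  funext a
  by_cases h : a = b <;> simp [eulerSub₂, X, h]

theorem five_eq_zero [CharP F 5] : (5 : F) = 0 := by
  exact_mod_cast CharP.cast_eq_zero F 5

theorem fin_eq_of_cast_sub_eq_zero [CharP F 5] {i j : Fin 5}
    (h : (i.val : F) - j.val = 0) : i = j :=
  Fin.ext (CharP.natCast_injOn_Iio F 5 i.isLt j.isLt (sub_eq_zero.mp h))

theorem eq_smul_X_of_eulerSub_eq_zero [CharP F 5] {b : Idx} {f : A F}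
    (h₁ : eulerSub₁ b f = 0) (h₂ : eulerSub₂ b f = 0) : f = f b • X b := by
  funext a
  by_cases h : a = b
  · simp [X, h]
  · have e₁ := congrFun h₁ a
    have e₂ := congrFun h₂ a
    simp only [eulerSub₁, eulerSub₂, Pi.zero_apply, mul_eq_zero] at e₁ e₂
    have hf : f a = 0 := by
      rcases e₁ with e₁ | e₁
      · rcases e₂ with e₂ | e₂
        · exact absurd
            (Prod.ext (fin_eq_of_cast_sub_eq_zero e₁) (fin_eq_of_cast_sub_eq_zero e₂)) h
        · exact e₂
      · exact e₁
    simp [X, h, hf]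

/-- The adjoint action of `x₁D₁` is diagonal. -/
theorem brM_x1D1 [CharP F 5] (m : Mel F) :
    brM x1D1 m =
      (eulerSub₁ (2, 2) m.1, (eulerSub₁ (1, 0) m.2.1.1, eulerSub₁ (0, 1) m.2.1.2),
        (eulerSub₁ (4, 3) m.2.2.1, eulerSub₁ (3, 4) m.2.2.2)) := by
  obtain ⟨f, ⟨g₁, g₂⟩, ⟨h₁, h₂⟩⟩ := m
  have h5 : (5 : F) = 0 := five_eq_zero
  simp only [brM, x1D1, ιW, brW, Dw, divW, smulA, mulA_zero_left, mulA_zero_right, d1_zero,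
    d2_zero, d1_X_one_zero, d2_X_one_zero, mulA_X_zero, mulA_comm _ (X (0, 0)), Prod.fst_zero,
    Prod.snd_zero, add_zero, Prod.mk_add_mk, Prod.mk_sub_mk, Prod.smul_mk,
    Prod.mk.injEq]
  refine ⟨?_, ⟨?_, ?_⟩, ?_, ?_⟩ <;> funext a <;>
    simp [mulA_X_d1_apply, eulerSub₁]
  · ring
  · ring
  · linear_combination h₁ a * h5
  · linear_combination h₂ a * h5

/-- The adjoint action of `x₂D₂` is diagonal. -/
theorem brM_x2D2 [CharP F 5] (m : Mel F) :
    brM x2D2 m =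
      (eulerSub₂ (2, 2) m.1, (eulerSub₂ (1, 0) m.2.1.1, eulerSub₂ (0, 1) m.2.1.2),
        (eulerSub₂ (4, 3) m.2.2.1, eulerSub₂ (3, 4) m.2.2.2)) := by
  obtain ⟨f, ⟨g₁, g₂⟩, ⟨h₁, h₂⟩⟩ := m
  have h5 : (5 : F) = 0 := five_eq_zero
  simp only [brM, x2D2, ιW, brW, Dw, divW, smulA, mulA_zero_left, mulA_zero_right, d1_zero,
    d2_zero, d1_X_zero_one, d2_X_zero_one, mulA_X_zero, mulA_comm _ (X (0, 0)), Prod.fst_zero,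
    Prod.snd_zero, add_zero, zero_add, Prod.mk_add_mk, Prod.mk_sub_mk, Prod.smul_mk,
    Prod.mk.injEq]
  refine ⟨?_, ⟨?_, ?_⟩, ?_, ?_⟩ <;> funext a <;>
    simp [mulA_X_d2_apply, eulerSub₂]
  · ring
  · ring
  · linear_combination h₁ a * h5
  · linear_combination h₂ a * h5

theorem mem_CM_iff (m : Mel F) :
    m ∈ CM F ↔ ∃ p q r s t : F,
      m = (r • X (2, 2), (p • X (1, 0), q • X (0, 1)), (s • X (4, 3), t • X (3, 4))) := by
  simp only [CM, Submodule.mem_span_insert, Submodule.mem_span_singleton]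
  constructor
  · rintro ⟨p, _, ⟨q, _, ⟨r, _, ⟨s, _, ⟨t, rfl⟩, rfl⟩, rfl⟩, rfl⟩, rfl⟩
    exact ⟨p, q, r, s, t, by simp [x1D1, x2D2, ιA, ιW, ιT]⟩
  · rintro ⟨p, q, r, s, t, rfl⟩
    exact ⟨p, _, ⟨q, _, ⟨r, _, ⟨s, _, ⟨t, rfl⟩, rfl⟩, rfl⟩, rfl⟩,
      by simp [x1D1, x2D2, ιA, ιW, ιT]⟩

theorem mem_CM_iff_centralizes [CharP F 5] (m : Mel F) :
    m ∈ CM F ↔ brM x1D1 m = 0 ∧ brM x2D2 m = 0 := by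
  rw [mem_CM_iff, brM_x1D1, brM_x2D2]
  constructor
  · rintro ⟨p, q, r, s, t, rfl⟩
    simp [eulerSub₁_smul_X, eulerSub₂_smul_X]
  · obtain ⟨f, ⟨g₁, g₂⟩, ⟨h₁, h₂⟩⟩ := m
    simp only [Prod.mk_eq_zero]
    rintro ⟨⟨a, ⟨b, c⟩, d, e⟩, a', ⟨b', c'⟩, d', e'⟩
    refine ⟨_, _, _, _, _, Prod.ext (eq_smul_X_of_eulerSub_eq_zero a a') (Prod.ext
      (Prod.ext (eq_smul_X_of_eulerSub_eq_zero b b') (eq_smul_X_of_eulerSub_eq_zero c c'))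
      (Prod.ext (eq_smul_X_of_eulerSub_eq_zero d d') (eq_smul_X_of_eulerSub_eq_zero e e')))⟩

theorem x1D1_mem_CM : (x1D1 : Mel F) ∈ CM F := Submodule.subset_span (by simp)

theorem x2D2_mem_CM : (x2D2 : Mel F) ∈ CM F := Submodule.subset_span (by simp)

/-- The subalgebra `C_M` is abelian. -/
theorem brM_eq_zero_of_mem_CM [CharP F 5] {u v : Mel F} (hu : u ∈ CM F) (hv : v ∈ CM F) :
    brM u v = 0 := by
  obtain ⟨p, q, r, s, t, rfl⟩ := (mem_CM_iff _).mp hu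
  obtain ⟨p', q', r', s', t', rfl⟩ := (mem_CM_iff _).mp hv
  have h5 : (5 : F) = 0 := five_eq_zero
  simp only [brM, brW, Dw, divW, smulA, mulA_smul_left, mulA_smul_right, mulA_add_left, d1_smul,
    d2_smul, d1_X_one_zero, d2_X_zero_one, mulA_X_zero, mulA_comm _ (X (0, 0)),
    mulA_X_X_eq_zero (F := F) (2, 2) (4, 3) (by decide),
    mulA_X_X_eq_zero (F := F) (2, 2) (3, 4) (by decide),
    mulA_X_X_eq_zero (F := F) (4, 3) (3, 4) (by decide),
    mulA_X_X_eq_zero (F := F) (3, 4) (4, 3) (by decide),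
    mulA_X_d1_X, mulA_X_d2_X, d2_X_one_zero, d1_X_zero_one, mulA_zero_right, smul_zero,
    Prod.mk_add_mk, Prod.mk_sub_mk, Prod.smul_mk, Prod.mk_eq_zero]
  refine ⟨?_, ⟨?_, ?_⟩, ?_, ?_⟩ <;> funext a <;> simp
  · ring
  · ring
  · ring
  · linear_combination ((p + q) * s' - (p' + q') * s) * X (4, 3) a * h5
  · linear_combination ((p + q) * t' - (p' + q') * t) * X (3, 4) a * h5

theorem finrank_CM : Module.finrank F (CM F) = 5 := by
  let e : (Fin 5 → F) →ₗ[F] Mel F :=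
    { toFun := fun c => (c 2 • X (2, 2), (c 0 • X (1, 0), c 1 • X (0, 1)),
        (c 3 • X (4, 3), c 4 • X (3, 4)))
      map_add' := fun c d => by simp [add_smul]
      map_smul' := fun r c => by simp [mul_smul] }
  have he : Function.Injective e := by
    intro c d h
    simp only [e, LinearMap.coe_mk, AddHom.coe_mk, Prod.mk.injEq] at h
    obtain ⟨h2, ⟨h0, h1⟩, h3, h4⟩ := h
    have hX : ∀ (b : Idx) (r s : F), r • (X b : A F) = s • X b → r = s := fun b r s h => by
      simpa [X] using congrFun h b
    funext i
    fin_cases i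
    exacts [hX _ _ _ h0, hX _ _ _ h1, hX _ _ _ h2, hX _ _ _ h3, hX _ _ _ h4]
  have hr : LinearMap.range e = CM F := by
    ext m
    rw [mem_CM_iff]
    constructor
    · rintro ⟨c, rfl⟩
      exact ⟨c 0, c 1, c 2, c 3, c 4, rfl⟩
    · rintro ⟨p, q, r, s, t, rfl⟩
      exact ⟨![p, q, r, s, t], rfl⟩
  rw [← hr, LinearMap.finrank_range_of_inj he, Module.finrank_fin_fun]

/-- The centralizer of the torus `T_M = ⟨x₁D₁, x₂D₂⟩` inside the Melikian algebra equals
`C_M = T_M ⊕ F·(x₁²x₂²) ⊕ F·(x₁⁴x₂³D̃₁) ⊕ F·(x₁³x₂⁴D̃₂)`; in particular it has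
dimension `5` and is a Cartan subalgebra of `M` (a nilpotent, self-normalizing
subalgebra). -/
theorem melikian_cartan (F : Type*) [Field F] [CharP F 5] :
    {m : Mel F | brM x1D1 m = 0 ∧ brM x2D2 m = 0} = (CM F : Set (Mel F)) ∧
    Module.finrank F (CM F) = 5 ∧
    (∀ x ∈ CM F, ∀ y ∈ CM F, brM x y ∈ CM F) ∧
    (∃ n : ℕ, ∀ x ∈ CM F, ∀ y ∈ CM F, (brM x)^[n] y = 0) ∧
    (∀ m : Mel F, (∀ c ∈ CM F, brM c m ∈ CM F) → m ∈ CM F) := by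
  refine ⟨Set.ext fun m => (mem_CM_iff_centralizes m).symm, finrank_CM,
    fun x hx y hy => ?_, ⟨1, fun x hx y hy => brM_eq_zero_of_mem_CM hx hy⟩, fun m hm => ?_⟩
  · rw [brM_eq_zero_of_mem_CM hx hy]
    exact zero_mem _
  · have h₁ := ((mem_CM_iff_centralizes _).mp (hm _ x1D1_mem_CM)).1
    have h₂ := ((mem_CM_iff_centralizes _).mp (hm _ x2D2_mem_CM)).2
    rw [brM_x1D1, brM_x1D1] at h₁
    rw [brM_x2D2, brM_x2D2] at h₂
    simp only [Prod.mk_eq_zero] at h₁ h₂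
    obtain ⟨a, ⟨b, c⟩, d, e⟩ := h₁
    obtain ⟨a', ⟨b', c'⟩, d', e'⟩ := h₂
    rw [mem_CM_iff_centralizes, brM_x1D1, brM_x2D2]
    simp only [Prod.mk_eq_zero]
    exact ⟨⟨eulerSub₁_eq_zero_of_sq a,
        ⟨eulerSub₁_eq_zero_of_sq b, eulerSub₁_eq_zero_of_sq c⟩,
        eulerSub₁_eq_zero_of_sq d, eulerSub₁_eq_zero_of_sq e⟩,
      eulerSub₂_eq_zero_of_sq a',
      ⟨eulerSub₂_eq_zero_of_sq b', eulerSub₂_eq_zero_of_sq c'⟩,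
      eulerSub₂_eq_zero_of_sq d', eulerSub₂_eq_zero_of_sq e'⟩

end Melikian
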